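/- arXiv:1910.07299 — 11 statements merged into one kernel-verified Lean document; each statement's English description precedes it below -/
import Mathlib

section
/- Let M be an acyclic module over a finite alphabet Λ with finite node set S and finite input set I. Then every node s ∈ S admits an output function: there exist an integer m ≥ 1 and a function O : (Λ^I)^m → Λ such that M(x,J)_s = O(J) for every configuration x ∈ Λ^S and every sequence J = (i_1,…,i_m) of m input configurations. -/
/-- A module over alphabet `Λ` with node set `S` and input set `I`:
a family of local functions `f s : Λ^S → Λ^I → Λ`. -/
structure AModule (Λ S I : Type) where
  f : S → (S → Λ) → (I → Λ) → Λ

namespace AModule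

variable {Λ S I : Type}

/-- One-step update `M(x,i)`. -/
def upd (M : AModule Λ S I) (x : S → Λ) (i : I → Λ) : S → Λ :=
  fun s => M.f s x i

/-- Iterated update `M(x,(i_1,…,i_m))`, defined by
`M(x,∅) = x` and `M(x,(i_1,…,i_m)) = M(M(x,i_1),(i_2,…,i_m))`. -/
def seqUpd (M : AModule Λ S I) (x : S → Λ) {m : ℕ} (J : Fin m → I → Λ) : S → Λ :=
  (List.ofFn J).foldl M.upd x

/-- Node `s` influences node `s'`: two configurations over `S ∪ I` differing
exactly at `s` (so with the same input part) on which `f_{s'}` differs. -/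
def Influences (M : AModule Λ S I) (s s' : S) : Prop :=
  ∃ (x x' : S → Λ) (i : I → Λ),
    (∀ r, r ≠ s → x r = x' r) ∧ x s ≠ x' s ∧ M.f s' x i ≠ M.f s' x' i

/-- `M` is acyclic: its interaction digraph has no directed cycle. -/
def Acyclic (M : AModule Λ S I) : Prop :=
  ∀ s, ¬ Relation.TransGen M.Influences s s

/-- `O` is an output function of delay `m` for node `s`. -/
def IsOutputFn (M : AModule Λ S I) (s : S) {m : ℕ}
    (O : (Fin m → I → Λ) → Λ) : Prop :=
  ∀ (x : S → Λ) (J : Fin m → I → Λ), M.seqUpd x J s = O J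

/-- The set of delays `m ≥ 1` for which `s` admits an output function. -/
def delaySet (M : AModule Λ S I) (s : S) : Set ℕ :=
  {m | 1 ≤ m ∧ ∃ O : (Fin m → I → Λ) → Λ, M.IsOutputFn s O}

/-- The complete recursive wiring `↻_ω M` as a map on configurations:
`F(x)_s = f_s(x, (x_{ω(α)})_{α ∈ I})`. -/
def wireF (M : AModule Λ S I) (ω : I → S) : (S → Λ) → (S → Λ) :=
  fun x => M.upd x (fun α => x (ω α))

/-- The input sequence of length `k` generated by `x`:
`Ĵ(x)^k_ℓ = F^{ℓ-1}(x)|_{ω(I)}`. -/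
def genSeq (M : AModule Λ S I) (ω : I → S) (x : S → Λ) (k : ℕ) :
    Fin k → I → Λ :=
  fun ℓ α => (M.wireF ω)^[ℓ.val] x (ω α)

end AModule

theorem AModule.f_congr {Λ S I : Type} [Fintype S] (M : AModule Λ S I) (s : S) (i : I → Λ)
    (x y : S → Λ) (h : ∀ r, M.Influences r s → x r = y r) : M.f s x i = M.f s y i := by
  classical
  have key : ∀ T : Finset S, M.f s (fun r => if r ∈ T then y r else x r) i = M.f s x i := by
    intro T
    induction T using Finset.induction_on with
    | empty => simp
    | insert a T ha ih =>
      rw [← ih]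
      by_contra hne
      by_cases hxy : x a = y a
      · apply hne
        congr 1
        funext r
        by_cases hr : r = a
        · subst hr
          simp [ha, hxy]
        · simp [hr]
      · apply hxy
        apply h
        refine ⟨_, _, i, ?_, ?_, hne⟩
        · intro r hr
          simp [hr]
        · simpa [ha] using fun e => hxy (Eq.symm e)
  have := key Finset.univ
  simpa using this.symm

theorem AModule.forget {Λ S I : Type} [Fintype S] (M : AModule Λ S I) (hM : M.Acyclic) (s : S) :
    ∃ m : ℕ, ∀ L : List (I → Λ), m ≤ L.length → ∀ x y : S → Λ,
      L.foldl M.upd x s = L.foldl M.upd y s := by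
  have hirr : Std.Irrefl (Relation.TransGen M.Influences) := ⟨hM⟩
  have wf : WellFounded (Relation.TransGen M.Influences) :=
    Finite.wellFounded_of_trans_of_irrefl _
  induction s using wf.induction with
  | _ s ih =>
    have ih' : ∀ r, ∃ m : ℕ, M.Influences r s → ∀ L : List (I → Λ), m ≤ L.length →
        ∀ x y : S → Λ, L.foldl M.upd x r = L.foldl M.upd y r := by
      intro r
      by_cases hr : M.Influences r s
      · obtain ⟨m, hm⟩ := ih r (Relation.TransGen.single hr)
        exact ⟨m, fun _ => hm⟩
      · exact ⟨0, fun h => absurd h hr⟩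
    choose m hm using ih'
    refine ⟨Finset.univ.sup m + 1, ?_⟩
    intro L hL x y
    rcases List.eq_nil_or_concat L with rfl | ⟨L', i, rfl⟩
    · simp at hL
    · simp only [List.concat_eq_append, List.foldl_append, List.foldl_cons, List.foldl_nil,
        List.length_append, List.length_cons, List.length_nil] at hL ⊢
      apply M.f_congr
      intro r hr
      apply hm r hr
      have : m r ≤ Finset.univ.sup m := Finset.le_sup (Finset.mem_univ r)
      omega

/-- every node of an acyclic module admits an output function. -/
theorem statement0 {Λ S I : Type} [Fintype Λ] [Fintype S] [Fintype I]
    (hΛ : 2 ≤ Fintype.card Λ)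
    (M : AModule Λ S I) (hM : M.Acyclic) (s : S) :
    ∃ m : ℕ, 1 ≤ m ∧ ∃ O : (Fin m → I → Λ) → Λ, M.IsOutputFn s O := by
  obtain ⟨m, hm⟩ := M.forget hM s
  have hne : Nonempty Λ := Fintype.card_pos_iff.mp (by omega)
  obtain ⟨a⟩ := hne
  refine ⟨m + 1, by omega, fun J => M.seqUpd (fun _ => a) J s, ?_⟩
  intro x J
  exact hm _ (by simp) _ _
end

section
/- Let M be an acyclic module over a finite alphabet Λ with n nodes. Then every node s admits an output function of delay at most n; in particular the minimal delay of the output function O_s of s is at most n. -/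
theorem aux_local {Λ S I : Type} [Fintype S] (M : AModule Λ S I) (s : S) (i : I → Λ)
    (D : Finset S) : ∀ (x x' : S → Λ), (∀ r, r ∉ D → x r = x' r) →
    (∀ r, M.Influences r s → x r = x' r) → M.f s x i = M.f s x' i := by
  classical
  induction D using Finset.induction_on with
  | empty =>
    intro x x' h _
    have : x = x' := funext fun r => h r (by simp)
    rw [this]
  | insert a D ha ih =>
    intro x x' h hinf
    have h1 : M.f s x i = M.f s (Function.update x a (x' a)) i := by
      by_contra hne
      by_cases hxa : x a = x' a
      · rw [← hxa, Function.update_eq_self] at hne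
        exact hne rfl
      · exact hxa (hinf a ⟨x, Function.update x a (x' a), i,
          fun r hr => by simp [Function.update_of_ne hr], by simpa using hxa, hne⟩)
    rw [h1]
    apply ih
    · intro r hr
      by_cases hra : r = a
      · subst hra; simp
      · rw [Function.update_of_ne hra]
        exact h r (by simp [hra, hr])
    · intro r hr
      by_cases hra : r = a
      · subst hra; simp
      · rw [Function.update_of_ne hra]
        exact hinf r hr

theorem aux_main {Λ S I : Type} [Fintype S] (M : AModule Λ S I) (hM : M.Acyclic) (k : ℕ) :
    ∀ s : S, Set.ncard {r | Relation.ReflTransGen M.Influences r s} ≤ k →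
    ∀ L : List (I → Λ), L.length = k → ∀ x x' : S → Λ,
    L.foldl M.upd x s = L.foldl M.upd x' s := by
  induction k with
  | zero =>
    intro s hs
    have h0 := (Set.ncard_eq_zero (Set.toFinite _)).1 (Nat.le_zero.1 hs)
    have : s ∈ {r | Relation.ReflTransGen M.Influences r s} := Relation.ReflTransGen.refl
    rw [h0] at this
    exact this.elim
  | succ k ih =>
    intro s hs L hL x x'
    rcases List.eq_nil_or_concat L with rfl | ⟨L', i, rfl⟩
    · simp at hL
    have hL' : L'.length = k := by simpa using hL
    simp only [List.concat_eq_append, List.foldl_append, List.foldl_cons, List.foldl_nil]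
    apply aux_local M s i Finset.univ
    · intro r hr
      exact absurd (Finset.mem_univ r) hr
    · intro r hr
      refine ih r ?_ L' hL' x x'
      have hlt : Set.ncard {t | Relation.ReflTransGen M.Influences t r} <
          Set.ncard {t | Relation.ReflTransGen M.Influences t s} := by
        apply Set.ncard_lt_ncard _ (Set.toFinite _)
        refine ⟨fun t ht => Relation.ReflTransGen.tail ht hr, fun hsub => ?_⟩
        have h1 : Relation.ReflTransGen M.Influences s r :=
          hsub (Relation.ReflTransGen.refl : Relation.ReflTransGen M.Influences s s)
        exact hM s (Relation.TransGen.tail' h1 hr)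
      omega

/-- in an acyclic module with `n` nodes, every node admits an
output function of delay at most `n`; in particular the minimal delay of its
output function is at most `n`. -/
theorem statement3 {Λ S I : Type} [Fintype Λ] [Fintype S] [Fintype I]
    (hΛ : 2 ≤ Fintype.card Λ)
    (M : AModule Λ S I) (hM : M.Acyclic) (s : S) :
    (∃ m : ℕ, 1 ≤ m ∧ m ≤ Fintype.card S ∧
      ∃ O : (Fin m → I → Λ) → Λ, M.IsOutputFn s O) ∧
    ∀ d : ℕ, IsLeast (M.delaySet s) d → d ≤ Fintype.card S := by
  have hpos : 0 < Fintype.card Λ := by omega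
  obtain ⟨a⟩ := Fintype.card_pos_iff.1 hpos
  have h1 : 1 ≤ Fintype.card S := Fintype.card_pos_iff.2 ⟨s⟩
  have hO : ∃ O : (Fin (Fintype.card S) → I → Λ) → Λ, M.IsOutputFn s O := by
    refine ⟨fun J => M.seqUpd (fun _ => a) J s, fun x J => ?_⟩
    refine aux_main M hM (Fintype.card S) s ?_ _ (by simp) _ _
    rw [← Nat.card_eq_fintype_card]
    exact Set.ncard_le_card _
  exact ⟨⟨_, h1, le_rfl, hO⟩, fun d hd => hd.2 ⟨h1, hO⟩⟩
end

section
/- Let M be an acyclic module over a finite alphabet Λ with input set I and node set S, let ω : I → S be a total function, and let F = ↻_ω M. Let J be an input sequence of length k such that M(x,J) is independent of x (denote this common configuration M(J)). If the input sequence of length k generated by M(J) equals J, i.e. Ĵ(M(J))^k = J, then F^k(M(J)) = M(J); in particular M(J) lies on a periodic orbit of F whose size divides k. -/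
theorem AModule.seqUpd_genSeq {Λ S I : Type} (M : AModule Λ S I) (ω : I → S)
    (x : S → Λ) (k : ℕ) : M.seqUpd x (M.genSeq ω x k) = (M.wireF ω)^[k] x := by
  induction k with
  | zero => simp [AModule.seqUpd]
  | succ n ih =>
    rw [Function.iterate_succ_apply', ← ih]
    unfold AModule.seqUpd at ih ⊢
    rw [List.ofFn_succ', List.concat_eq_append, List.foldl_append]
    have h : (fun i : Fin n => M.genSeq ω x (n + 1) i.castSucc) = M.genSeq ω x n := rfl
    rw [h, ih]
    rfl

/-- if `M(x,J)` is independent of `x` (with common value `y`) and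
the input sequence of length `k` generated by `y` is `J`, then `F^k(y) = y`,
and `y` lies on a periodic orbit of `F = ↻_ω M` whose size divides `k`. -/
theorem statement5 {Λ S I : Type} [Fintype Λ] [Fintype S] [Fintype I]
    (hΛ : 2 ≤ Fintype.card Λ)
    (M : AModule Λ S I) (hM : M.Acyclic) (ω : I → S) (k : ℕ)
    (J : Fin k → I → Λ) (y : S → Λ)
    (hy : ∀ x : S → Λ, M.seqUpd x J = y)
    (hgen : M.genSeq ω y k = J) :
    (M.wireF ω)^[k] y = y ∧ Function.minimalPeriod (M.wireF ω) y ∣ k := by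
  have h : (M.wireF ω)^[k] y = y := by
    rw [← AModule.seqUpd_genSeq, hgen, hy]
  exact ⟨h, Function.IsPeriodicPt.minimalPeriod_dvd h⟩
end

section
/- Let M and M' be acyclic modules over a finite alphabet Λ, with node sets S, S' and input sets I, I', let T ⊆ S and T' ⊆ S' with |T| = |T'|, and suppose there are bijections g : I → I' and h : T → T' such that for every s ∈ T the output functions O_s of M and O'_{h(s)} of M' have the same delay and satisfy O_s(J) = O'_{h(s)}(J ∘ g^{-1}) for every input sequence J over I whose length is that delay. Then for every total function ω : I → T, there exists a bijection ĥ from the set of configurations lying on periodic orbits of F = ↻_ω M to the set of configurations lying on periodic orbits of F' = ↻_{h∘ω∘g^{-1}} M' such that ĥ(F(x)) = F'(ĥ(x)) for all such x; in particular F and F' have the same number of attractors of each size. -/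
/-- An attractor of size `c` of the parallel map `F`: the (finite) periodic
orbit of a configuration whose minimal period is `c`. -/
def IsAttractor {Λ S : Type} (F : (S → Λ) → (S → Λ)) (c : ℕ)
    (X : Set (S → Λ)) : Prop :=
  ∃ x : S → Λ, Function.minimalPeriod F x = c ∧ X = {y | ∃ j : ℕ, y = F^[j] x}

namespace AModule

/-- The run of `M` from `x` under the infinite input stream `u`. -/
def run {Λ S I : Type} (M : AModule Λ S I) (x : S → Λ) (u : ℕ → I → Λ) : ℕ → S → Λ
  | 0 => x
  | t + 1 => M.upd (run M x u t) (u t)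

theorem seqUpd_eq_run {Λ S I : Type} (M : AModule Λ S I) (x : S → Λ) (u : ℕ → I → Λ) (m : ℕ) :
    M.seqUpd x (fun l : Fin m => u l.val) = M.run x u m := by
  induction m with
  | zero => simp [seqUpd, run]
  | succ m ih =>
    simp only [seqUpd] at ih
    simp only [seqUpd, List.ofFn_succ', List.concat_eq_append, List.foldl_append,
      List.foldl_cons, List.foldl_nil, run, Fin.val_last, Fin.val_castSucc, ih]

theorem run_add {Λ S I : Type} (M : AModule Λ S I) (x : S → Λ) (u : ℕ → I → Λ) (a b : ℕ) :
    M.run x u (a + b) = M.run (M.run x u a) (fun t => u (a + t)) b := by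
  induction b with
  | zero => rfl
  | succ b ih =>
    rw [← Nat.add_assoc]
    simp only [run, ih]

theorem run_wire {Λ S I : Type} (M : AModule Λ S I) (ω : I → S) (x : S → Λ)
    (u : ℕ → I → Λ) (t : ℕ) (hu : ∀ t α, u t α = (M.wireF ω)^[t] x (ω α)) :
    M.run x u t = (M.wireF ω)^[t] x := by
  induction t with
  | zero => rfl
  | succ t ih =>
    rw [Function.iterate_succ_apply']
    simp only [run, ih, wireF]
    congr 1
    funext α
    exact hu t α

theorem f_congr_s6 {Λ S I : Type} [Finite S] (M : AModule Λ S I) (s : S) (i : I → Λ)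
    (x y : S → Λ) (hxy : ∀ r, M.Influences r s → x r = y r) : M.f s x i = M.f s y i := by
  classical
  have := Fintype.ofFinite S
  have key : ∀ A : Finset S, ∀ x y : S → Λ, (∀ r, r ∉ A → x r = y r) →
      (∀ r, M.Influences r s → x r = y r) → M.f s x i = M.f s y i := by
    intro A
    induction A using Finset.induction_on with
    | empty =>
      intro x y h1 _
      have : x = y := funext fun r => h1 r (by simp)
      rw [this]
    | insert a A ha ih =>
      intro x y h1 h2
      have e2 : M.f s (Function.update x a (y a)) i = M.f s y i := by
        apply ih
        · intro r hr
          by_cases hra : r = a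
          · subst hra; simp
          · rw [Function.update_of_ne hra]
            exact h1 r (by simp [hra, hr])
        · intro r hr
          by_cases hra : r = a
          · subst hra; simp
          · rw [Function.update_of_ne hra]
            exact h2 r hr
      rw [← e2]
      by_contra hne
      by_cases hxa : x a = y a
      · apply hne
        rw [← hxa, Function.update_eq_self]
      · apply hxa
        apply h2
        refine ⟨x, Function.update x a (y a), i, ?_, ?_, hne⟩
        · intro r hr
          rw [Function.update_of_ne hr]
        · simpa using hxa
  exact key Finset.univ x y (fun r hr => absurd (Finset.mem_univ r) hr) hxy

theorem exists_forget {Λ S I : Type} [Finite S] (M : AModule Λ S I) (hM : M.Acyclic) :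
    ∃ N, ∀ t, N ≤ t → ∀ x y u, M.run x u t = M.run y u t := by
  have := Fintype.ofFinite S
  have : Std.Irrefl (Relation.TransGen M.Influences) := ⟨hM⟩
  have wf : WellFounded (Relation.TransGen M.Influences) :=
    Finite.wellFounded_of_trans_of_irrefl _
  have key : ∀ s, ∃ n, ∀ t, n ≤ t → ∀ x y u, M.run x u t s = M.run y u t s := by
    intro s
    induction s using wf.induction with
    | h s ih =>
      have : ∀ r, ∃ n, M.Influences r s →
          ∀ t, n ≤ t → ∀ x y u, M.run x u t r = M.run y u t r := by
        intro r
        by_cases hr : M.Influences r s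
        · obtain ⟨n, hn⟩ := ih r (Relation.TransGen.single hr)
          exact ⟨n, fun _ => hn⟩
        · exact ⟨0, fun h => absurd h hr⟩
      choose n hn using this
      refine ⟨(∑ r, n r) + 1, fun t ht x y u => ?_⟩
      obtain ⟨t, rfl⟩ : ∃ t', t = t' + 1 := ⟨t - 1, by omega⟩
      simp only [run, upd]
      apply f_congr_s6
      intro r hr
      apply hn r hr
      have := Finset.single_le_sum (f := n) (fun i _ => Nat.zero_le _) (Finset.mem_univ r)
      omega
  choose n hn using key
  refine ⟨∑ r, n r, fun t ht x y u => funext fun r => hn r t ?_ x y u⟩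
  exact (Finset.single_le_sum (f := n) (fun i _ => Nat.zero_le _) (Finset.mem_univ r)).trans ht

theorem iterate_mul_fix {X : Type} (F : X → X) (x : X) (k n : ℕ) (h : F^[k] x = x) :
    F^[k * n] x = x := by
  rw [Function.iterate_mul]
  exact Function.iterate_fixed h n

theorem per_unique {Λ S I : Type} [Finite S] (M : AModule Λ S I) (hM : M.Acyclic) (ω : I → S)
    (x y : S → Λ) (hx : ∃ k, 1 ≤ k ∧ (M.wireF ω)^[k] x = x)
    (hy : ∃ k, 1 ≤ k ∧ (M.wireF ω)^[k] y = y)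
    (h : ∀ t α, (M.wireF ω)^[t] x (ω α) = (M.wireF ω)^[t] y (ω α)) : x = y := by
  obtain ⟨k, hk, hx⟩ := hx
  obtain ⟨l, hl, hy⟩ := hy
  obtain ⟨N, hN⟩ := M.exists_forget hM
  have h1 := iterate_mul_fix _ x k (l * N) hx
  have h2 := iterate_mul_fix _ y l (k * N) hy
  have e : l * (k * N) = k * (l * N) := by ring
  rw [e] at h2
  have hle : N ≤ k * (l * N) := by
    rw [← Nat.mul_assoc]
    exact Nat.le_mul_of_pos_left _ (Nat.mul_pos hk hl)
  have := hN _ hle x y (fun t α => (M.wireF ω)^[t] x (ω α))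
  rw [run_wire M ω x _ _ (fun _ _ => rfl), run_wire M ω y _ _ h, h1, h2] at this
  exact this

theorem per_exists {Λ S S' I I' : Type} [Nonempty Λ] [Finite S'] [Finite I]
    (M : AModule Λ S I) (M' : AModule Λ S' I') (hM' : M'.Acyclic) (g : I ≃ I')
    (ω : I → S) (ω' : I' → S')
    (H : ∀ α, ∃ d, ∀ u x x', M.run x u d (ω α) =
      M'.run x' (fun t α' => u t (g.symm α')) d (ω' (g α)))
    (x : S → Λ) (hx : ∃ k, 1 ≤ k ∧ (M.wireF ω)^[k] x = x) :
    ∃ x' : S' → Λ, (∃ k, 1 ≤ k ∧ (M'.wireF ω')^[k] x' = x') ∧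
      ∀ t α, (M.wireF ω)^[t] x (ω α) = (M'.wireF ω')^[t] x' (ω' (g α)) := by
  have := Fintype.ofFinite I
  obtain ⟨k, hk, hx⟩ := hx
  obtain ⟨N, hN⟩ := M'.exists_forget hM'
  choose d hd using H
  obtain ⟨K, hK1, hKN, hKd, hKx⟩ : ∃ K, 1 ≤ K ∧ N ≤ K ∧ (∀ α, d α ≤ K) ∧
      (M.wireF ω)^[K] x = x := by
    refine ⟨k * (N + ∑ α, d α + 1), ?_, ?_, ?_, iterate_mul_fix _ x _ _ hx⟩
    · exact Nat.mul_pos hk (by omega)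
    · exact le_trans (by omega) (Nat.le_mul_of_pos_left _ hk)
    · intro α
      have := Finset.single_le_sum (f := d) (fun i _ => Nat.zero_le _) (Finset.mem_univ α)
      exact le_trans (by omega) (Nat.le_mul_of_pos_left _ hk)
  have hper : ∀ t, (M.wireF ω)^[K + t] x = (M.wireF ω)^[t] x := by
    intro t
    rw [Nat.add_comm, Function.iterate_add_apply, hKx]
  let v : ℕ → I → Λ := fun t α => (M.wireF ω)^[t] x (ω α)
  let u : ℕ → I' → Λ := fun t α' => v t (g.symm α')
  have hu : (fun t => u (K + t)) = u := by
    funext t α'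
    simp only [u, v, hper]
  let z : S' → Λ := fun _ => Classical.arbitrary Λ
  let x' := M'.run z u K
  have hrun : ∀ t, M'.run z u (K + t) = M'.run x' u t := by
    intro t
    rw [run_add, hu]
  have hin : ∀ t α, v t α = M'.run x' u t (ω' (g α)) := by
    intro t α
    have hdle := hKd α
    obtain ⟨a, ha⟩ : ∃ a, K + t = a + d α := ⟨K + t - d α, by omega⟩
    rw [← hrun, ha, run_add]
    have h1 := hd α (fun t => v (a + t)) (M.run x v a) (M'.run z u a)
    rw [← run_add, ← ha, run_wire M ω x v _ (fun _ _ => rfl), hper] at h1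
    exact h1
  have hit : ∀ t, M'.run x' u t = (M'.wireF ω')^[t] x' := by
    intro t
    induction t with
    | zero => rfl
    | succ t ih =>
      rw [Function.iterate_succ_apply', ← ih]
      simp only [run, wireF]
      congr 1
      funext α'
      have := hin t (g.symm α')
      rw [g.apply_symm_apply] at this
      exact this
  refine ⟨x', ⟨K, hK1, ?_⟩, ?_⟩
  · rw [← hit]
    exact hN K hKN _ _ _
  · intro t α
    rw [← hit]
    exact hin t α

end AModule

theorem attractor_card {Λ S S' : Type} (F : (S → Λ) → (S → Λ)) (F' : (S' → Λ) → (S' → Λ))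
    (hh : (S → Λ) → (S' → Λ))
    (hb : Set.BijOn hh {x | ∃ k, 1 ≤ k ∧ F^[k] x = x} {x' | ∃ k, 1 ≤ k ∧ F'^[k] x' = x'})
    (he : ∀ x : S → Λ, (∃ k, 1 ≤ k ∧ F^[k] x = x) → hh (F x) = F' (hh x))
    (c : ℕ) (hc : 1 ≤ c) :
    Nat.card {X : Set (S → Λ) // IsAttractor F c X} =
        Nat.card {X' : Set (S' → Λ) // IsAttractor F' c X'} := by
  have hP : ∀ x, (∃ k, 1 ≤ k ∧ F^[k] x = x) → ∀ j, ∃ k, 1 ≤ k ∧ F^[k] (F^[j] x) = F^[j] x := by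
    rintro x ⟨k, hk, hx⟩ j
    refine ⟨k, hk, ?_⟩
    rw [← Function.iterate_add_apply, Nat.add_comm, Function.iterate_add_apply, hx]
  have heq : ∀ x, (∃ k, 1 ≤ k ∧ F^[k] x = x) → ∀ j, hh (F^[j] x) = F'^[j] (hh x) := by
    intro x hx j
    induction j with
    | zero => rfl
    | succ j ih =>
      rw [Function.iterate_succ_apply', Function.iterate_succ_apply', he _ (hP x hx j), ih]
  have hmp : ∀ x, (∃ k, 1 ≤ k ∧ F^[k] x = x) →
      Function.minimalPeriod F x = Function.minimalPeriod F' (hh x) := by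
    intro x hx
    rw [Function.minimalPeriod_eq_minimalPeriod_iff]
    intro n
    simp only [Function.IsPeriodicPt, Function.IsFixedPt]
    rw [← heq x hx]
    exact ⟨fun h => by rw [h], fun h => hb.injOn (hP x hx n) hx h⟩
  have hmem : ∀ x, Function.minimalPeriod F x = c → ∃ k, 1 ≤ k ∧ F^[k] x = x := by
    intro x hx
    exact ⟨c, hc, hx ▸ Function.isPeriodicPt_minimalPeriod F x⟩
  have hmem' : ∀ x, Function.minimalPeriod F' x = c → ∃ k, 1 ≤ k ∧ F'^[k] x = x := by
    intro x hx
    exact ⟨c, hc, hx ▸ Function.isPeriodicPt_minimalPeriod F' x⟩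
  have himg : ∀ x, (∃ k, 1 ≤ k ∧ F^[k] x = x) →
      Set.image hh {y | ∃ j : ℕ, y = F^[j] x} = {y | ∃ j : ℕ, y = F'^[j] (hh x)} := by
    intro x hx
    ext y
    constructor
    · rintro ⟨_, ⟨j, rfl⟩, rfl⟩
      exact ⟨j, heq x hx j⟩
    · rintro ⟨j, rfl⟩
      exact ⟨_, ⟨j, rfl⟩, heq x hx j⟩
  have hsub : ∀ X, IsAttractor F c X → X ⊆ {x | ∃ k, 1 ≤ k ∧ F^[k] x = x} := by
    rintro X ⟨x, hx, rfl⟩ _ ⟨j, rfl⟩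
    exact hP x (hmem x hx) j
  have hmap : ∀ X, IsAttractor F c X → IsAttractor F' c (Set.image hh X) := by
    rintro X ⟨x, hx, rfl⟩
    exact ⟨hh x, (hmp x (hmem x hx)) ▸ hx, himg x (hmem x hx)⟩
  refine Nat.card_congr (Equiv.ofBijective
    (fun X => ⟨Set.image hh X.1, hmap X.1 X.2⟩) ⟨?_, ?_⟩)
  · rintro ⟨X, hX⟩ ⟨Y, hY⟩ hXY
    have hXY' : Set.image hh X = Set.image hh Y := congrArg Subtype.val hXY
    exact Subtype.ext ((hb.injOn.image_eq_image_iff (hsub X hX) (hsub Y hY)).1 hXY')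
  · rintro ⟨X', x', hx', rfl⟩
    obtain ⟨x, hx, rfl⟩ := hb.surjOn (hmem' x' hx')
    exact ⟨⟨{y | ∃ j : ℕ, y = F^[j] x}, x, (hmp x hx).trans hx', rfl⟩,
      Subtype.ext (himg x hx)⟩

/-- two acyclic modules whose output functions on `T`, `T'` agree
(up to bijections `g : I ≃ I'` and `h : T ≃ T'`) yield, for every complete
recursive wiring `ω : I → T`, networks `F = ↻_ω M` and
`F' = ↻_{h∘ω∘g⁻¹} M'` whose sets of periodic configurations are in an
`F`/`F'`-equivariant bijection; in particular they have the same number of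
attractors of each size. -/
theorem statement6 {Λ S S' I I' : Type}
    [Fintype Λ] [Fintype S] [Fintype S'] [Fintype I] [Fintype I']
    (hΛ : 2 ≤ Fintype.card Λ)
    (M : AModule Λ S I) (M' : AModule Λ S' I')
    (hM : M.Acyclic) (hM' : M'.Acyclic)
    (T : Set S) (T' : Set S') (g : I ≃ I') (h : T ≃ T')
    (hout : ∀ s : T, ∃ d : ℕ,
      IsLeast (M.delaySet s.1) d ∧ IsLeast (M'.delaySet (h s).1) d ∧
      ∀ (O : (Fin d → I → Λ) → Λ) (O' : (Fin d → I' → Λ) → Λ),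
        M.IsOutputFn s.1 O → M'.IsOutputFn (h s).1 O' →
        ∀ J : Fin d → I → Λ, O J = O' (fun ℓ α' => J ℓ (g.symm α')))
    (ω : I → T)
    (F : (S → Λ) → (S → Λ)) (hF : F = M.wireF (fun α => (ω α).1))
    (F' : (S' → Λ) → (S' → Λ))
    (hF' : F' = M'.wireF (fun α' => (h (ω (g.symm α'))).1)) :
    ∃ hh : (S → Λ) → (S' → Λ),
      Set.BijOn hh {x | ∃ k, 1 ≤ k ∧ F^[k] x = x}
        {x' | ∃ k, 1 ≤ k ∧ F'^[k] x' = x'} ∧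
      (∀ x : S → Λ, (∃ k, 1 ≤ k ∧ F^[k] x = x) → hh (F x) = F' (hh x)) ∧
      ∀ c : ℕ, 1 ≤ c →
        Nat.card {X : Set (S → Λ) // IsAttractor F c X} =
        Nat.card {X' : Set (S' → Λ) // IsAttractor F' c X'} := by
  classical
  subst hF hF'
  have : Nonempty Λ := Fintype.card_pos_iff.1 (by omega)
  have hD : ∀ s : T, ∃ d, ∀ u x x', M.run x u d s.1 =
      M'.run x' (fun t α' => u t (g.symm α')) d (h s).1 := by
    intro s
    obtain ⟨d, ⟨⟨_, O, hO⟩, _⟩, ⟨⟨_, O', hO'⟩, _⟩, hOO⟩ := hout s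
    refine ⟨d, fun u x x' => ?_⟩
    rw [← AModule.seqUpd_eq_run, ← AModule.seqUpd_eq_run, hO, hOO O O' hO hO']
    exact (hO' x' _).symm
  have H1 : ∀ α, ∃ d, ∀ u x x', M.run x u d (ω α).1 =
      M'.run x' (fun t α' => u t (g.symm α')) d
        ((fun α' => (h (ω (g.symm α'))).1) (g α)) := by
    intro α
    simpa using hD (ω α)
  have H2 : ∀ α', ∃ d, ∀ u x' x, M'.run x' u d ((fun α' => (h (ω (g.symm α'))).1) α') =
      M.run x (fun t α => u t (g.symm.symm α)) d ((fun α => (ω α).1) (g.symm α')) := by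
    intro α'
    obtain ⟨d, hd⟩ := hD (ω (g.symm α'))
    refine ⟨d, fun u x' x => ?_⟩
    have := hd (fun t α => u t (g α)) x x'
    simp only [Equiv.apply_symm_apply] at this
    exact this.symm
  have E1 := AModule.per_exists M M' hM' g (fun α => (ω α).1)
    (fun α' => (h (ω (g.symm α'))).1) H1
  have E2 := AModule.per_exists M' M hM g.symm (fun α' => (h (ω (g.symm α'))).1)
    (fun α => (ω α).1) H2
  have U1 := AModule.per_unique M hM (fun α => (ω α).1)
  have U2 := AModule.per_unique M' hM' (fun α' => (h (ω (g.symm α'))).1)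
  generalize M.wireF (fun α => (ω α).1) = F at *
  generalize M'.wireF (fun α' => (h (ω (g.symm α'))).1) = F' at *
  simp only [Equiv.symm_apply_apply] at E1
  choose! hh hhP hhR using E1
  have hstep : ∀ x, (∃ k, 1 ≤ k ∧ F^[k] x = x) → ∃ k, 1 ≤ k ∧ F^[k] (F x) = F x := by
    rintro x ⟨k, hk, hx⟩
    refine ⟨k, hk, ?_⟩
    rw [← Function.iterate_succ_apply, Function.iterate_succ_apply', hx]
  have hstep' : ∀ x, (∃ k, 1 ≤ k ∧ F'^[k] x = x) → ∃ k, 1 ≤ k ∧ F'^[k] (F' x) = F' x := by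
    rintro x ⟨k, hk, hx⟩
    refine ⟨k, hk, ?_⟩
    rw [← Function.iterate_succ_apply, Function.iterate_succ_apply', hx]
  have hb : Set.BijOn hh {x | ∃ k, 1 ≤ k ∧ F^[k] x = x}
        {x' | ∃ k, 1 ≤ k ∧ F'^[k] x' = x'} := by
    refine ⟨fun x hx => hhP x hx, ?_, ?_⟩
    · intro x hx y hy hxy
      apply U1 x y hx hy
      intro t α
      rw [hhR x hx, hhR y hy, hxy]
    · intro x' hx'
      obtain ⟨x, hx, hR⟩ := E2 x' hx'
      refine ⟨x, hx, U2 _ _ (hhP x hx) hx' ?_⟩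
      intro t α'
      rw [hR, hhR x hx]
  have he : ∀ x : S → Λ, (∃ k, 1 ≤ k ∧ F^[k] x = x) → hh (F x) = F' (hh x) := by
    intro x hx
    apply U2 _ _ (hhP _ (hstep x hx)) (hstep' _ (hhP x hx))
    intro t α'
    rw [← hhR _ (hstep x hx), ← Function.iterate_succ_apply, ← Function.iterate_succ_apply,
      hhR x hx]
  exact ⟨hh, hb, he, fun c hc => attractor_card F F' hh hb he c hc⟩
end

section
/- Let M and M' be acyclic modules over a finite alphabet Λ, with node sets S, S' and input sets I, I', let T ⊆ S and T' ⊆ S' with |T| = |T'|, and suppose there are bijections g : I → I' and h : T → T' such that for every s ∈ T the output functions O_s of M and O'_{h(s)} of M' have the same delay and satisfy O_s(J) = O'_{h(s)}(J ∘ g^{-1}) for every input sequence J over I whose length is that delay. Let ω : I → T be total, F = ↻_ω M and F' = ↻_{h∘ω∘g^{-1}} M'. Then for every configuration x lying on a periodic orbit of F there exists a configuration x' lying on a periodic orbit of F' such that for every k ≥ 1, the generated input sequences satisfy Ĵ'(x')^k = Ĵ(x)^k ∘ g^{-1}. -/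
theorem AModule.seqUpd_run {Λ S I : Type} (M : AModule Λ S I) (i : ℕ → I → Λ) (y : ℕ → S → Λ)
    (hy : ∀ n, y (n + 1) = M.upd (y n) (i n)) (m d : ℕ) :
    M.seqUpd (y m) (fun ℓ : Fin d => i (m + ℓ.val)) = y (m + d) := by
  induction d with
  | zero => simp [AModule.seqUpd]
  | succ d ih =>
    unfold AModule.seqUpd at ih ⊢
    rw [List.ofFn_succ', List.concat_eq_append, List.foldl_append]
    simp only [Fin.val_castSucc, Fin.val_last, List.foldl_cons, List.foldl_nil]
    rw [ih, ← hy]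
    rfl

/-- in the setting of equivalent output functions on `T`, `T'`,
every configuration on a periodic orbit of `F = ↻_ω M` has a counterpart on a
periodic orbit of `F' = ↻_{h∘ω∘g⁻¹} M'` generating, for every `k ≥ 1`, the
input sequence `Ĵ(x)^k ∘ g⁻¹`. -/
theorem statement7 {Λ S S' I I' : Type}
    [Fintype Λ] [Fintype S] [Fintype S'] [Fintype I] [Fintype I']
    (hΛ : 2 ≤ Fintype.card Λ)
    (M : AModule Λ S I) (M' : AModule Λ S' I')
    (hM : M.Acyclic) (hM' : M'.Acyclic)
    (T : Set S) (T' : Set S') (g : I ≃ I') (h : T ≃ T')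
    (hout : ∀ s : T, ∃ d : ℕ,
      IsLeast (M.delaySet s.1) d ∧ IsLeast (M'.delaySet (h s).1) d ∧
      ∀ (O : (Fin d → I → Λ) → Λ) (O' : (Fin d → I' → Λ) → Λ),
        M.IsOutputFn s.1 O → M'.IsOutputFn (h s).1 O' →
        ∀ J : Fin d → I → Λ, O J = O' (fun ℓ α' => J ℓ (g.symm α')))
    (ω : I → T)
    (F : (S → Λ) → (S → Λ)) (hF : F = M.wireF (fun α => (ω α).1))
    (F' : (S' → Λ) → (S' → Λ))
    (hF' : F' = M'.wireF (fun α' => (h (ω (g.symm α'))).1)) :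
    ∀ x : S → Λ, (∃ k, 1 ≤ k ∧ F^[k] x = x) →
      ∃ x' : S' → Λ, (∃ k, 1 ≤ k ∧ F'^[k] x' = x') ∧
        ∀ k : ℕ, 1 ≤ k →
          M'.genSeq (fun α' => (h (ω (g.symm α'))).1) x' k =
          fun ℓ α' => M.genSeq (fun α => (ω α).1) x k ℓ (g.symm α') := by
  intro x ⟨p, hp, hx⟩
  have hxp : ∀ N n, F^[n + N * p] x = F^[n] x := by
    intro N n
    have h1 : Function.IsPeriodicPt F (N * p) x :=
      Function.IsPeriodicPt.const_mul (show Function.IsPeriodicPt F p x from hx) N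
    rw [Function.iterate_add_apply, h1.eq]
  let i' : ℕ → I' → Λ := fun n α' => F^[n] x (ω (g.symm α')).1
  have hi' : ∀ N n, i' (n + N * p) = i' n := by
    intro N n
    funext α'
    simp only [i', hxp]
  have hne : Nonempty Λ := Fintype.card_pos_iff.mp (by omega)
  let z : S' → Λ := fun _ => Classical.arbitrary Λ
  let y : ℕ → S' → Λ := fun n => Nat.rec z (fun n w => M'.upd w (i' n)) n
  have hy : ∀ n, y (n + 1) = M'.upd (y n) (i' n) := fun n => rfl
  obtain ⟨a, b, hab, hyab⟩ : ∃ a b : ℕ, a < b ∧ y (a * p) = y (b * p) := by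
    obtain ⟨a, b, hne, he⟩ := Finite.exists_ne_map_eq_of_infinite (fun n : ℕ => y (n * p))
    rcases lt_or_gt_of_ne hne with hl | hl
    · exact ⟨a, b, hl, he⟩
    · exact ⟨b, a, hl, he.symm⟩
  obtain ⟨c, rfl⟩ := Nat.exists_eq_add_of_lt hab
  let Y : ℕ → S' → Λ := fun n => y (n + a * p)
  have hY : ∀ n, Y (n + 1) = M'.upd (Y n) (i' n) := by
    intro n
    have h1 := hy (n + a * p)
    rw [hi'] at h1
    rw [← h1]
    change y (n + 1 + a * p) = y (n + a * p + 1)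
    rw [Nat.add_right_comm]
  have hY0 : Y ((c + 1) * p) = Y 0 := by
    simp only [Y, zero_add]
    rw [hyab]
    congr 1
    ring
  have hYP : ∀ n, Y (n + (c + 1) * p) = Y n := by
    intro n
    induction n with
    | zero => rw [zero_add, hY0]
    | succ n ih =>
      rw [hY n, ← ih, ← hi' (c + 1) n, ← hY]
      congr 1
      ring
  have hYN : ∀ N n, Y (n + N * ((c + 1) * p)) = Y n := by
    intro N n
    induction N with
    | zero => simp
    | succ N ih =>
      rw [← ih, ← hYP (n + N * ((c + 1) * p))]
      congr 1
      ring
  have hFs : ∀ n, F^[n + 1] x = M.upd (F^[n] x) (fun α => F^[n] x (ω α).1) := by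
    intro n
    rw [Function.iterate_succ_apply']
    exact congrFun hF _
  have key : ∀ (s : T) (n : ℕ), Y n (h s).1 = F^[n] x s.1 := by
    intro s n
    obtain ⟨d, ⟨⟨_, O, hO⟩, _⟩, ⟨⟨_, O', hO'⟩, _⟩, hOO⟩ := hout s
    have hge : d ≤ n + d * ((c + 1) * p) :=
      le_trans (Nat.le_mul_of_pos_right d (by positivity)) (Nat.le_add_left _ _)
    obtain ⟨m, hm⟩ := Nat.exists_eq_add_of_le' hge
    have e1 := M'.seqUpd_run i' Y hY m d
    have e2 := M.seqUpd_run (fun n α => F^[n] x (ω α).1) (fun n => F^[n] x) hFs m d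
    have e3 := hOO O O' hO hO' (fun ℓ : Fin d => fun α => F^[m + ℓ.val] x (ω α).1)
    rw [← hO (F^[m] x)] at e3
    rw [← hO' (Y m)] at e3
    have e4 : M'.seqUpd (Y m) (fun ℓ : Fin d => i' (m + ℓ.val)) (h s).1
      = M.seqUpd (F^[m] x) (fun ℓ : Fin d => fun α => F^[m + ℓ.val] x (ω α).1) s.1 := e3.symm
    rw [e1, e2, ← hm, hYN, ← mul_assoc, hxp] at e4
    exact e4
  have hYF : ∀ n, F'^[n] (Y 0) = Y n := by
    intro n
    induction n with
    | zero => rfl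
    | succ n ih =>
      rw [Function.iterate_succ_apply', ih, hY, hF']
      unfold AModule.wireF
      congr 1
      funext α'
      exact key _ _
  refine ⟨Y 0, ⟨(c + 1) * p, Nat.mul_pos (Nat.succ_pos c) hp, ?_⟩, ?_⟩
  · rw [hYF, hY0]
  · intro k _
    funext ℓ α'
    unfold AModule.genSeq
    rw [← hF, ← hF', hYF]
    exact key _ _
end

section
/- Let M be an acyclic module over a finite alphabet Λ with input set I and node set S, let ω : I → S be total, and let F = ↻_ω M. Let (x_1,…,x_c) and (x'_1,…,x'_c) be two attractors of size c of F, i.e. F(x_j) = x_{j+1} for j < c, F(x_c) = x_1, and similarly for the x'_j, with both orbits of exact period c. If for every 1 ≤ j ≤ c and every α ∈ I one has (x_j)_{ω(α)} = (x'_j)_{ω(α)}, then x_j = x'_j for every j. -/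
/-- If two configurations agree on all influencers of `s`, then `f s` agrees on them. -/
theorem AModule.f_congr_of_influences {Λ S I : Type} [Fintype S]
    (M : AModule Λ S I) (s : S) (y y' : S → Λ) (i : I → Λ)
    (h : ∀ r, M.Influences r s → y r = y' r) : M.f s y i = M.f s y' i := by
  classical
  have key : ∀ T : Finset S, M.f s (T.piecewise y' y) i = M.f s y i := by
    intro T
    induction T using Finset.induction_on with
    | empty => simp
    | insert a T ha ih =>
      rw [← ih]
      by_contra hne
      have hya : y a ≠ y' a := by
        intro he
        apply hne
        congr 1
        funext r
        by_cases hr : r = a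
        · subst hr
          simp [Finset.piecewise, ha, he]
        · simp [Finset.piecewise, hr]
      refine hya (h a ⟨_, _, i, ?_, ?_, hne⟩)
      · intro r hr
        simp [Finset.piecewise, hr]
      · simpa [Finset.piecewise, ha] using fun e => hya e.symm
  have := key Finset.univ
  simpa using this.symm

/-- two attractors of size `c` of `F = ↻_ω M` that agree on the
output set `ω(I)` are equal. -/
theorem statement9 {Λ S I : Type} [Fintype Λ] [Fintype S] [Fintype I]
    (hΛ : 2 ≤ Fintype.card Λ)
    (M : AModule Λ S I) (hM : M.Acyclic) (ω : I → S)
    (c : ℕ) [NeZero c] (x x' : Fin c → S → Λ)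
    (hx : ∀ j : Fin c, M.wireF ω (x j) = x (j + 1))
    (hx' : ∀ j : Fin c, M.wireF ω (x' j) = x' (j + 1))
    (hper : ∀ j : Fin c, Function.minimalPeriod (M.wireF ω) (x j) = c)
    (hper' : ∀ j : Fin c, Function.minimalPeriod (M.wireF ω) (x' j) = c)
    (hproj : ∀ (j : Fin c) (α : I), x j (ω α) = x' j (ω α)) :
    ∀ j : Fin c, x j = x' j := by
  have hwf : WellFounded (Relation.TransGen M.Influences) := by
    haveI : Std.Irrefl (Relation.TransGen M.Influences) := ⟨hM⟩
    exact Finite.wellFounded_of_trans_of_irrefl _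
  have main : ∀ s : S, ∀ j : Fin c, x j s = x' j s := by
    intro s
    induction s using hwf.induction with
    | _ s ih =>
      intro j
      have e1 := congrFun (hx (j - 1)) s
      have e2 := congrFun (hx' (j - 1)) s
      rw [sub_add_cancel] at e1 e2
      rw [← e1, ← e2]
      have hi : (fun α => x (j - 1) (ω α)) = fun α => x' (j - 1) (ω α) :=
        funext fun α => hproj (j - 1) α
      simp only [AModule.wireF, AModule.upd]
      rw [hi]
      exact M.f_congr_of_influences s _ _ _
        fun r hr => ih r (Relation.TransGen.single hr) (j - 1)
  exact fun j => funext fun s => main s j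
end

section
/- Let M be a one-to-one module over a finite alphabet Λ with node set S, single input α and designated output node e, and suppose the output function O = O_e of e has (minimal) delay d. Then |S| ≥ d. -/
namespace AModule

theorem congr_aux {Λ S I : Type} [DecidableEq S] (M : AModule Λ S I) (s : S) (i : I → Λ)
    (T : Finset S) : ∀ y y' : S → Λ, (∀ r, r ∉ T → y r = y' r) →
      (∀ r, M.Influences r s → y r = y' r) → M.f s y i = M.f s y' i := by
  induction T using Finset.induction_on with
  | empty =>
    intro y y' h _
    have : y = y' := funext fun r => h r (by simp)
    rw [this]
  | insert a T ha ih =>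
    intro y y' h hinf
    have h1 : M.f s y i = M.f s (Function.update y a (y' a)) i := by
      by_cases hya : y a = y' a
      · rw [← hya, Function.update_eq_self]
      · by_contra hne
        refine hya (hinf a ⟨y, Function.update y a (y' a), i, ?_, ?_, hne⟩)
        · intro r hr
          rw [Function.update_of_ne hr]
        · rwa [Function.update_self]
    rw [h1]
    apply ih
    · intro r hr
      by_cases hra : r = a
      · subst hra; simp
      · rw [Function.update_of_ne hra]
        exact h r (by simp [hra, hr])
    · intro r hr
      by_cases hra : r = a
      · subst hra; simp
      · rw [Function.update_of_ne hra]
        exact hinf r hr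

theorem forget_aux {Λ S I : Type} [Fintype S] (M : AModule Λ S I) (hM : M.Acyclic) (n : ℕ) :
    ∀ (s : S) (L : List (I → Λ)), {r | Relation.ReflTransGen M.Influences r s}.ncard ≤ n →
      L.length = n → ∀ x x' : S → Λ, L.foldl M.upd x s = L.foldl M.upd x' s := by
  classical
  induction n with
  | zero =>
    intro s L hs
    have h0 := (Set.ncard_eq_zero (Set.toFinite _)).1 (Nat.le_zero.1 hs)
    have : s ∈ {r | Relation.ReflTransGen M.Influences r s} := Relation.ReflTransGen.refl
    rw [h0] at this
    exact this.elim
  | succ n ih =>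
    intro s L hs hL x x'
    rcases List.eq_nil_or_concat L with rfl | ⟨L', i, rfl⟩
    · simp at hL
    · simp only [List.concat_eq_append, List.foldl_append, List.foldl_cons, List.foldl_nil]
      refine congr_aux M s i Finset.univ _ _ (by simp) fun r hr => ?_
      refine ih r L' ?_ (by simpa using hL) x x'
      have : {t | Relation.ReflTransGen M.Influences t r}.ncard
          < {t | Relation.ReflTransGen M.Influences t s}.ncard := by
        apply Set.ncard_lt_ncard _ (Set.toFinite _)
        refine ⟨fun t ht => Relation.ReflTransGen.tail ht hr, fun hsub => ?_⟩
        have hsr : Relation.ReflTransGen M.Influences s r :=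
          hsub (Relation.ReflTransGen.refl (a := s))
        exact hM s (Relation.TransGen.tail' hsr hr)
      omega

end AModule

/-- a one-to-one module (acyclic, single input) whose designated
output node has an output function of minimal delay `d` has at least `d`
nodes. -/
theorem statement11 {Λ S : Type} [Fintype Λ] [Fintype S]
    (hΛ : 2 ≤ Fintype.card Λ)
    (M : AModule Λ S Unit) (hM : M.Acyclic) (e : S)
    (d : ℕ) (hd : IsLeast (M.delaySet e) d) :
    d ≤ Fintype.card S := by
  have hne : Nonempty Λ := Fintype.card_pos_iff.1 (by omega)
  obtain ⟨a⟩ := hne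
  refine hd.2 ⟨Fintype.card_pos_iff.2 ⟨e⟩, fun J => M.seqUpd (fun _ => a) J e, fun x J => ?_⟩
  refine AModule.forget_aux M hM (Fintype.card S) e _ ?_ (by simp) _ _
  rw [← Nat.card_eq_fintype_card]
  exact Set.ncard_le_card _
end

section
/- Let F be an automata network over a finite alphabet Λ with finite node set S of size n whose interaction digraph is acyclic. Then F has a unique fixed point x*, and every configuration converges to it under the parallel update: F^n(x) = x* for every x ∈ Λ^S. -/
/-- Node `s` influences node `s'` in an automata network with parallel update
`F`: two configurations differing exactly at `s` on which `F(·)_{s'}`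
differs. -/
def ANInfluences {Λ S : Type} (F : (S → Λ) → (S → Λ)) (s s' : S) : Prop :=
  ∃ x x' : S → Λ, (∀ r, r ≠ s → x r = x' r) ∧ x s ≠ x' s ∧ F x s' ≠ F x' s'

theorem an_agree {Λ S : Type} [Fintype S] (F : (S → Λ) → (S → Λ)) (s : S)
    (x y : S → Λ) (h : ∀ r, ANInfluences F r s → x r = y r) : F x s = F y s := by
  classical
  have key : ∀ T : Finset S, F x s = F (fun r => if r ∈ T then y r else x r) s := by
    intro T
    induction T using Finset.induction_on with
    | empty => simp
    | insert a T ha ih =>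
      rw [ih]
      by_contra hne
      by_cases hxy : x a = y a
      · apply hne
        congr 1
        funext r
        by_cases hr : r = a
        · subst hr
          simp [hxy]
        · simp [hr]
      · apply hxy
        apply h
        refine ⟨_, _, ?_, ?_, hne⟩
        · intro r hr
          simp [hr]
        · simpa [ha] using hxy
  have := key Finset.univ
  simpa using this

open Classical in
theorem an_iter {Λ S : Type} [Fintype S] (F : (S → Λ) → (S → Λ))
    (hacyclic : ∀ s : S, ¬ Relation.TransGen (ANInfluences F) s s) (x y : S → Λ) (k : ℕ) :
    ∀ s : S, (Finset.univ.filter (fun r => Relation.TransGen (ANInfluences F) r s)).card < k →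
      F^[k] x s = F^[k] y s := by
  induction k with
  | zero => intro s h; omega
  | succ k ih =>
    intro s h
    rw [Function.iterate_succ_apply', Function.iterate_succ_apply']
    apply an_agree
    intro r hr
    apply ih
    refine lt_of_lt_of_le (Finset.card_lt_card ?_) (Nat.lt_succ_iff.mp h)
    rw [Finset.ssubset_iff_of_subset]
    · exact ⟨r, by simpa using Relation.TransGen.single hr, by simpa using hacyclic r⟩
    · intro t ht
      simp only [Finset.mem_filter, Finset.mem_univ, true_and] at ht ⊢
      exact ht.tail hr

/-- an acyclic automata network on `n` nodes has a unique fixed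
point, to which every configuration converges in `n` parallel steps. -/
theorem statement13 {Λ S : Type} [Fintype Λ] [Fintype S]
    (hΛ : 2 ≤ Fintype.card Λ)
    (F : (S → Λ) → (S → Λ))
    (hacyclic : ∀ s : S, ¬ Relation.TransGen (ANInfluences F) s s) :
    ∃ xs : S → Λ, F xs = xs ∧ (∀ x : S → Λ, F^[Fintype.card S] x = xs) ∧
      ∀ y : S → Λ, F y = y → y = xs := by
  classical
  have hc : ∀ x y : S → Λ, F^[Fintype.card S] x = F^[Fintype.card S] y := by
    intro x y
    funext s
    apply an_iter F hacyclic
    rw [← Finset.card_univ]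
    apply Finset.card_lt_card
    rw [Finset.ssubset_iff_of_subset (Finset.subset_univ _)]
    exact ⟨s, Finset.mem_univ s, by simpa using hacyclic s⟩
  have : Nonempty Λ := Fintype.card_pos_iff.mp (by omega)
  let x0 : S → Λ := fun _ => Classical.arbitrary Λ
  refine ⟨F^[Fintype.card S] x0, ?_, fun x => hc x x0, ?_⟩
  · rw [← Function.iterate_succ_apply' F, Function.iterate_succ_apply]
    exact hc _ _
  · intro y hy
    rw [← hc y x0]
    exact (Function.iterate_fixed hy _).symm
end

section
/- Let M be an acyclic module over a finite alphabet Λ with input set I and node set S such that every node admits an output function of delay at most D, let ω : I → S be total, and let F = ↻_ω M. Then F has a fixed point if and only if there exists an input configuration i ∈ Λ^I such that, writing J for the constant sequence (i, i, …, i) of length D and M(J) for the common value of M(x,J) over all x ∈ Λ^S, one has M(J)_{ω(α)} = i_α for every α ∈ I; moreover in that case M(J) is a fixed point of F. -/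
theorem AModule.seqUpd_const_aux {Λ S I : Type} (M : AModule Λ S I) (i : I → Λ) (n : ℕ) :
    ∀ x : S → Λ, M.seqUpd x (fun _ : Fin n => i) = (fun y => M.upd y i)^[n] x := by
  induction n with
  | zero => intro x; simp [AModule.seqUpd]
  | succ k ih =>
    intro x
    rw [Function.iterate_succ_apply, ← ih]
    simp [AModule.seqUpd, List.ofFn_succ]

/-- `F = ↻_ω M` has a fixed point iff there is an input
configuration `i` such that the common value `M(J)` of `M(x₀,J)` for the
constant sequence `J = (i,…,i)` of length `D` projects through `ω` back to
`i`; moreover in that case `M(J)` is a fixed point of `F`. -/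
theorem statement14 {Λ S I : Type} [Fintype Λ] [Fintype S] [Fintype I]
    (hΛ : 2 ≤ Fintype.card Λ)
    (M : AModule Λ S I) (hM : M.Acyclic) (D : ℕ)
    (hdelay : ∀ s : S, ∃ m : ℕ, 1 ≤ m ∧ m ≤ D ∧
      ∃ O : (Fin m → I → Λ) → Λ, M.IsOutputFn s O)
    (ω : I → S) :
    ((∃ x : S → Λ, M.wireF ω x = x) ↔
      ∃ i : I → Λ, ∀ (x₀ : S → Λ) (α : I),
        M.seqUpd x₀ (fun _ : Fin D => i) (ω α) = i α) ∧
    (∀ i : I → Λ,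
      (∀ (x₀ : S → Λ) (α : I), M.seqUpd x₀ (fun _ : Fin D => i) (ω α) = i α) →
      ∀ x₀ : S → Λ,
        M.wireF ω (M.seqUpd x₀ (fun _ : Fin D => i)) =
          M.seqUpd x₀ (fun _ : Fin D => i)) := by
  have key : ∀ (i : I → Λ) (x y : S → Λ),
      M.seqUpd x (fun _ : Fin D => i) = M.seqUpd y (fun _ : Fin D => i) := by
    intro i x y
    funext s
    obtain ⟨m, _, hm, O, hO⟩ := hdelay s
    have h : ∀ z : S → Λ, M.seqUpd z (fun _ : Fin D => i) s = O (fun _ => i) := by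
      intro z
      rw [← hO ((fun y => M.upd y i)^[D - m] z) (fun _ => i),
        AModule.seqUpd_const_aux, AModule.seqUpd_const_aux, ← Function.iterate_add_apply,
        Nat.add_sub_cancel' hm]
    rw [h, h]
  have fixed : ∀ i : I → Λ,
      (∀ (x₀ : S → Λ) (α : I), M.seqUpd x₀ (fun _ : Fin D => i) (ω α) = i α) →
      ∀ x₀ : S → Λ,
        M.wireF ω (M.seqUpd x₀ (fun _ : Fin D => i)) =
          M.seqUpd x₀ (fun _ : Fin D => i) := by
    intro i hi x₀
    have h1 : (fun α => M.seqUpd x₀ (fun _ : Fin D => i) (ω α)) = i := funext (hi x₀)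
    unfold AModule.wireF
    rw [h1]
    have h2 := key i (M.upd x₀ i) x₀
    rw [AModule.seqUpd_const_aux, AModule.seqUpd_const_aux] at h2
    rw [AModule.seqUpd_const_aux]
    exact (Function.iterate_succ_apply' (fun y => M.upd y i) D x₀).symm.trans h2
  refine ⟨⟨?_, ?_⟩, fixed⟩
  · rintro ⟨x, hx⟩
    refine ⟨fun α => x (ω α), fun x₀ α => ?_⟩
    rw [key _ x₀ x, AModule.seqUpd_const_aux]
    have hx' : Function.IsFixedPt (fun y => M.upd y (fun α => x (ω α))) x := hx
    rw [hx'.iterate D]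
  · rintro ⟨i, hi⟩
    have : Nonempty Λ := Fintype.card_pos_iff.mp (by omega)
    exact ⟨_, fixed i hi (fun _ => Classical.choice this)⟩
end

section
/- Let M be an acyclic module over a finite alphabet Λ with input set I and node set S such that every node admits an output function of delay at most D, let ω : I → S be total, let F = ↻_ω M, let c ≥ 1, and let k be a multiple of c with k ≥ D. Then F has a configuration x with F^c(x) = x if and only if there exists a sequence J of c input configurations such that, writing J^{k/c} for the (k/c)-fold concatenation of J and x := M(J^{k/c}) (the common value of M(x₀, J^{k/c}) over all starting configurations x₀), the input sequence generated by x of length c satisfies Ĵ(x)^c = J. -/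
namespace AModule

/-- Iterated update along the first `n` terms of an infinite input sequence. -/
def runSeq {Λ S I : Type} (M : AModule Λ S I) (x : S → Λ) (j : ℕ → I → Λ) : ℕ → S → Λ
  | 0 => x
  | n + 1 => M.upd (runSeq M x j n) (j n)

theorem seqUpd_eq_runSeq {Λ S I : Type} (M : AModule Λ S I) (x : S → Λ) (j : ℕ → I → Λ)
    (n : ℕ) : M.seqUpd x (fun l : Fin n => j l.val) = M.runSeq x j n := by
  induction n with
  | zero => simp [seqUpd, runSeq]
  | succ n ih =>
    simp only [seqUpd, runSeq] at ih ⊢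
    rw [List.ofFn_succ_last, List.foldl_append]
    simp only [Fin.val_castSucc, Fin.val_last, List.foldl_cons, List.foldl_nil]
    rw [ih]

theorem runSeq_add {Λ S I : Type} (M : AModule Λ S I) (x : S → Λ) (j : ℕ → I → Λ)
    (a n : ℕ) : M.runSeq x j (a + n) = M.runSeq (M.runSeq x j a) (fun l => j (a + l)) n := by
  induction n with
  | zero => rfl
  | succ n ih =>
    rw [← Nat.add_assoc]
    simp only [runSeq]
    rw [ih]

theorem runSeq_indep {Λ S I : Type} (M : AModule Λ S I) (D k : ℕ)
    (hdelay : ∀ s : S, ∃ m : ℕ, 1 ≤ m ∧ m ≤ D ∧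
      ∃ O : (Fin m → I → Λ) → Λ, M.IsOutputFn s O) (hkD : D ≤ k)
    (x y : S → Λ) (j : ℕ → I → Λ) : M.runSeq x j k = M.runSeq y j k := by
  funext s
  obtain ⟨m, _, hm, O, hO⟩ := hdelay s
  obtain ⟨a, rfl⟩ : ∃ a, k = a + m := ⟨k - m, by omega⟩
  rw [runSeq_add, runSeq_add, ← seqUpd_eq_runSeq, hO, ← seqUpd_eq_runSeq, hO]

theorem runSeq_eq_iterate {Λ S I : Type} (M : AModule Λ S I) (ω : I → S) (x : S → Λ)
    (j : ℕ → I → Λ) (n : ℕ) (h : ∀ l < n, ∀ α, (M.wireF ω)^[l] x (ω α) = j l α) :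
    M.runSeq x j n = (M.wireF ω)^[n] x := by
  induction n with
  | zero => rfl
  | succ n ih =>
    rw [Function.iterate_succ_apply', runSeq, ih (fun l hl => h l (by omega)), wireF]
    congr 1
    funext α
    exact (h n (by omega) α).symm

end AModule

/-- for `c ≥ 1` and `k` a multiple of `c` with `k ≥ D`,
`F = ↻_ω M` has a configuration of period `c` iff there is a sequence `J` of
`c` input configurations such that `x := M(J^{k/c})` (the common value over
all starting configurations of the update by the `(k/c)`-fold repetition of
`J`) generates the input sequence `Ĵ(x)^c = J`. -/
theorem statement15 {Λ S I : Type} [Fintype Λ] [Fintype S] [Fintype I]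
    (hΛ : 2 ≤ Fintype.card Λ)
    (M : AModule Λ S I) (hM : M.Acyclic) (D : ℕ)
    (hdelay : ∀ s : S, ∃ m : ℕ, 1 ≤ m ∧ m ≤ D ∧
      ∃ O : (Fin m → I → Λ) → Λ, M.IsOutputFn s O)
    (ω : I → S) (c k : ℕ) (hc : 1 ≤ c) (hck : c ∣ k) (hkD : D ≤ k) :
    (∃ x : S → Λ, (M.wireF ω)^[c] x = x) ↔
      ∃ J : Fin c → I → Λ, ∀ x₀ : S → Λ,
        M.genSeq ω
          (M.seqUpd x₀ (fun ℓ : Fin k => J ⟨ℓ.val % c, Nat.mod_lt _ hc⟩)) c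
          = J := by
  have hne : Nonempty Λ := Fintype.card_pos_iff.mp (by omega)
  constructor
  · rintro ⟨x, hx⟩
    have hp : Function.IsPeriodicPt (M.wireF ω) c x := hx
    refine ⟨M.genSeq ω x c, fun x₀ => ?_⟩
    have h1 : M.seqUpd x₀ (fun ℓ : Fin k => M.genSeq ω x c ⟨ℓ.val % c, Nat.mod_lt _ hc⟩) = x := by
      have h2 : (fun ℓ : Fin k => M.genSeq ω x c ⟨ℓ.val % c, Nat.mod_lt _ hc⟩)
          = fun ℓ : Fin k => (fun (n : ℕ) (α : I) => (M.wireF ω)^[n] x (ω α)) ℓ.val := by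
        funext ℓ α
        simp only [AModule.genSeq]
        rw [hp.iterate_mod_apply]
      rw [h2, M.seqUpd_eq_runSeq x₀ (fun (n : ℕ) (α : I) => (M.wireF ω)^[n] x (ω α)) k,
        M.runSeq_indep D k hdelay hkD x₀ x,
        M.runSeq_eq_iterate ω x _ k (fun _ _ _ => rfl)]
      exact hp.trans_dvd hck
    rw [h1]
  · rintro ⟨J, hJ⟩
    obtain ⟨x₀⟩ : Nonempty (S → Λ) := inferInstance
    have hx := hJ x₀
    obtain ⟨j, hj⟩ : ∃ j : ℕ → I → Λ, j = fun n => J ⟨n % c, Nat.mod_lt _ hc⟩ := ⟨_, rfl⟩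
    have h2 : (fun ℓ : Fin k => J ⟨ℓ.val % c, Nat.mod_lt _ hc⟩)
        = fun ℓ : Fin k => j ℓ.val := by
      rw [hj]
    rw [h2, AModule.seqUpd_eq_runSeq] at hx
    have hper : ∀ a, c ∣ a → (fun l => j (a + l)) = j := by
      rintro a ⟨b, rfl⟩
      subst hj
      funext l
      simp
    refine ⟨M.runSeq x₀ j k, ?_⟩
    rw [← M.runSeq_eq_iterate ω _ j c]
    · have e1 := M.runSeq_add x₀ j k c
      have e2 := M.runSeq_add x₀ j c k
      rw [hper k hck] at e1
      rw [hper c dvd_rfl] at e2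
      rw [← e1, Nat.add_comm, e2]
      exact M.runSeq_indep D k hdelay hkD _ _ j
    · intro l hl α
      have h3 := congrFun (congrFun hx ⟨l, hl⟩) α
      rw [AModule.genSeq] at h3
      rw [h3, hj]
      simp [Nat.mod_eq_of_lt hl]
end

section
/- Let n ≥ 1 and let φ : (Fin n → Bool) → Bool. Consider the Boolean automata network F on node set {v_1,…,v_n} ∪ {p, q} with local functions f_{v_j}(x) = x_{v_j} for each j, f_p(x) = φ(x_{v_1},…,x_{v_n}), and f_q(x) = (¬x_p) ∧ (¬x_q), with parallel update F(x)_s = f_s(x). Then F has a fixed point if and only if φ is satisfiable, i.e. there exists an assignment a : Fin n → Bool with φ(a) = true. -/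
/-- The Boolean automata network of the fixed-point reduction: variable nodes
`Sum.inl j` keep their state, the solver node `Sum.inr false` computes `φ` on
the variable nodes, and the oscillator node `Sum.inr true` computes
`¬ solver ∧ ¬ oscillator`. -/
def solverNet (n : ℕ) (φ : (Fin n → Bool) → Bool)
    (x : Fin n ⊕ Bool → Bool) : Fin n ⊕ Bool → Bool
  | Sum.inl j => x (Sum.inl j)
  | Sum.inr false => φ (fun j => x (Sum.inl j))
  | Sum.inr true => !(x (Sum.inr false)) && !(x (Sum.inr true))

/-- the network with identity variable nodes, a solver node and
an oscillator node has a fixed point iff `φ` is satisfiable. -/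
theorem statement16 (n : ℕ) (hn : 1 ≤ n) (φ : (Fin n → Bool) → Bool) :
    (∃ x : Fin n ⊕ Bool → Bool, solverNet n φ x = x) ↔
      ∃ a : Fin n → Bool, φ a = true := by
  constructor
  · rintro ⟨x, hx⟩
    refine ⟨fun j => x (Sum.inl j), ?_⟩
    have h1 : φ (fun j => x (Sum.inl j)) = x (Sum.inr false) := congrFun hx (Sum.inr false)
    have h2 : (!(x (Sum.inr false)) && !(x (Sum.inr true))) = x (Sum.inr true) :=
      congrFun hx (Sum.inr true)
    rw [h1]
    revert h2
    cases x (Sum.inr false) <;> cases x (Sum.inr true) <;> simp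
  · rintro ⟨a, ha⟩
    refine ⟨Sum.elim a (fun b => !b), ?_⟩
    funext s
    rcases s with j | _ | _
    · rfl
    · exact ha
    · rfl
end
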